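/- Let ‖·‖ be a decomposable norm whose unit-ball extreme points have unit ‖·‖_u-norm, let b = Ax₀ + z, k₀ = K(x₀), c = max_{x ∈ T_{x₀} \ {0}} ‖x‖²/(k₀‖x‖_u²), and set k̃ = 36 r c k₀ (1+γ) γ_inc. Let x⁺ = Prox_{λ,L}(x) and suppose Assumption 1 holds with constants r > 1, δ ∈ (0,1/4], γ, and that λ ≥ λ_tgt. If L ≤ γ_inc ρ₊(A, 2k̃) and max{ (1/(2λ)) ‖A(x − x₀)‖₂², ‖x − x₀‖ } ≤ 9 c k₀ λ (1+γ) / (2 ρ₋(A, c(1+γ)² k₀)), then K(x⁺) ≤ k̃. -/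

import Mathlib

/-!
Write `N` for the norm and `κ = c k₀`.

A decomposable norm whose unit-ball extreme points (atoms) have unit `‖·‖ᵤ`-norm behaves like the
`ℓ¹` or the nuclear norm. Convexity gives `‖·‖ᵤ ≤ N`, so each atom `a` lies in the dual ball, and
decomposability at `a` gives `e a = a`: a point of the dual ball exposing `a` is `a` plus a dual
ball element of `(T a)ᗮ`. Repeatedly subtracting the multiple of an atom at which the remainder
attains its dual norm produces a decomposition `x = ∑ τᵢ aᵢ` into orthonormal atoms with positive
nonincreasing `τᵢ` (`Peel`, `exists_peel`), with `∑ aᵢ ∈ ∂N(x)`. Three facts follow: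

* `K x` is at most the number of atoms, since `e x` is the shortest subgradient (`Peel.K_le`);
* every subgradient at `x` pairs to `1` with each atom (`Peel.subgrad`);
* the sum of the `s` leading atoms maximizes `⟪x, ·⟫` over the dual ball vectors with `N ≤ s`
  (`Peel.top`).

Suppose `K x⁺ > k̃`. Then `x⁺` has at least `s = ⌈k̃⌉` atoms; let `p` be the sum of the `s` leading
ones, `q = p - e x₀` and `h = x - x₀`. The optimality condition
`ξ = -(∇f(x) + L (x⁺ - x)) / λ ∈ ∂N(x⁺)` and `⟪ξ, p⟫ = s` give `λ (s - κ) ≤ λ ⟪ξ, q⟫`. Moreover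
`⟪x₀, p⟫ ≤ N x₀ = ⟪x₀, e x₀⟫` and `⟪x⁺, e x₀⟫ ≤ ⟪x⁺, p⟫`, so `⟪x₀ - x⁺, q⟫ ≤ 0`. Hence
`λ (s - κ) ≤ -⟪A h, A q⟫ + ⟪A* z, q⟫ + L N(h) - L ⟪h, e x₀⟫`.

The four terms are at most `λ (k̃ + s + 3κ) / 4` (Young's inequality with the upper restricted
isometry bound for `q`), `λ (s + κ) / 4`, `λ k̃ / 8` and `λ k̃ / 16` respectively, which is
incompatible with `72 κ ≤ k̃ ≤ s`.
-/

open Matrix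

namespace PGH

variable {n m : ℕ}

/-- The inner product `⟪x, y⟫ = xᵀ B y` on `ℝⁿ` induced by a matrix `B`. -/
def ip (B : Matrix (Fin n) (Fin n) ℝ) (x y : Fin n → ℝ) : ℝ :=
  dotProduct x (B.mulVec y)

/-- The norm `‖x‖ᵤ = √(xᵀ B x)` induced by the inner product. -/
noncomputable def normu (B : Matrix (Fin n) (Fin n) ℝ) (x : Fin n → ℝ) : ℝ :=
  Real.sqrt (ip B x x)

/-- `N` is a norm on `ℝⁿ`. -/
structure IsNorm (N : (Fin n → ℝ) → ℝ) : Prop where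
  nonneg : ∀ x, 0 ≤ N x
  eq_zero_iff : ∀ x, N x = 0 ↔ x = 0
  triangle : ∀ x y, N (x + y) ≤ N x + N y
  smul_eq : ∀ (c : ℝ) (x), N (c • x) = |c| * N x

/-- The dual norm `‖y‖* = sup {⟪y, x⟫ : N x ≤ 1}`. -/
noncomputable def dualNorm (B : Matrix (Fin n) (Fin n) ℝ) (N : (Fin n → ℝ) → ℝ)
    (y : Fin n → ℝ) : ℝ :=
  sSup ((fun x => ip B y x) '' {x | N x ≤ 1})

/-- The subdifferential of `N` at `x` with respect to `⟪·,·⟫`. -/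
def subdiff (B : Matrix (Fin n) (Fin n) ℝ) (N : (Fin n → ℝ) → ℝ) (x : Fin n → ℝ) :
    Set (Fin n → ℝ) :=
  {z | ∀ y, N x + ip B z (y - x) ≤ N y}

/-- The set `G` of extreme points of the unit ball of `N`. -/
def extPts (N : (Fin n → ℝ) → ℝ) : Set (Fin n → ℝ) :=
  Set.extremePoints ℝ {x | N x ≤ 1}

/-- The orthogonal complement (w.r.t. `⟪·,·⟫`) of a subspace `T`, as a set. -/
def perp (B : Matrix (Fin n) (Fin n) ℝ) (T : Submodule ℝ (Fin n → ℝ)) :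
    Set (Fin n → ℝ) :=
  {v | ∀ u ∈ T, ip B u v = 0}

/-- A decomposability structure for the norm `N`: for every `x` there are a subspace `T x`
and a vector `e x ∈ T x` with `∂N(x) = {e x + v : v ∈ (T x)ᗮ, ‖v‖* ≤ 1}`. -/
structure DecompStruct (B : Matrix (Fin n) (Fin n) ℝ) (N : (Fin n → ℝ) → ℝ) where
  T : (Fin n → ℝ) → Submodule ℝ (Fin n → ℝ)
  e : (Fin n → ℝ) → (Fin n → ℝ)
  e_mem : ∀ x, e x ∈ T x
  subdiff_eq : ∀ x, subdiff B N x =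
    {ξ | ∃ v ∈ perp B (T x), dualNorm B N v ≤ 1 ∧ ξ = e x + v}

/-- `K x = ‖e x‖ᵤ²`. -/
noncomputable def Kfun (B : Matrix (Fin n) (Fin n) ℝ) (N : (Fin n → ℝ) → ℝ)
    (D : DecompStruct B N) (x : Fin n → ℝ) : ℝ :=
  (normu B (D.e x)) ^ 2

/-- Squared Euclidean norm `‖v‖₂²` on `ℝᵐ`. -/
def sq2 (v : Fin m → ℝ) : ℝ := dotProduct v v

/-- The least-squares loss `f(x) = ½ ‖A x - b‖₂²`. -/
noncomputable def fls (A : Matrix (Fin m) (Fin n) ℝ) (b : Fin m → ℝ) (x : Fin n → ℝ) : ℝ :=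
  (1 / 2) * sq2 (A.mulVec x - b)

/-- The adjoint `A* = B⁻¹ Aᵀ` of `A` w.r.t. `⟪·,·⟫`. -/
noncomputable def Astar (B : Matrix (Fin n) (Fin n) ℝ) (A : Matrix (Fin m) (Fin n) ℝ) :
    Matrix (Fin n) (Fin m) ℝ := B⁻¹ * Aᵀ

/-- The gradient `∇f(x) = A*(A x - b)` of the least-squares loss w.r.t. `⟪·,·⟫`. -/
noncomputable def gradf (B : Matrix (Fin n) (Fin n) ℝ) (A : Matrix (Fin m) (Fin n) ℝ)
    (b : Fin m → ℝ) (x : Fin n → ℝ) : Fin n → ℝ :=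
  (Astar B A).mulVec (A.mulVec x - b)

/-- `ρ` is a valid lower restricted isometry constant of `A` at level `k`. -/
def IsLowerRIP (B : Matrix (Fin n) (Fin n) ℝ) (N : (Fin n → ℝ) → ℝ)
    (A : Matrix (Fin m) (Fin n) ℝ) (k ρ : ℝ) : Prop :=
  0 < ρ ∧ ∀ x : Fin n → ℝ, (N x) ^ 2 ≤ k * (normu B x) ^ 2 →
    ρ * (normu B x) ^ 2 ≤ sq2 (A.mulVec x)

/-- `ρ` is a valid upper restricted isometry constant of `A` at level `k`. -/
def IsUpperRIP (B : Matrix (Fin n) (Fin n) ℝ) (N : (Fin n → ℝ) → ℝ)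
    (A : Matrix (Fin m) (Fin n) ℝ) (k ρ : ℝ) : Prop :=
  0 < ρ ∧ ∀ x : Fin n → ℝ, (N x) ^ 2 ≤ k * (normu B x) ^ 2 →
    sq2 (A.mulVec x) ≤ ρ * (normu B x) ^ 2

/-- The regularized objective `φ_λ(x) = f(x) + λ N(x)`. -/
noncomputable def phi (A : Matrix (Fin m) (Fin n) ℝ) (b : Fin m → ℝ)
    (N : (Fin n → ℝ) → ℝ) (lam : ℝ) (x : Fin n → ℝ) : ℝ :=
  fls A b x + lam * N x

/-- The proximal model `m_{λ,L}(y, x)`. -/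
noncomputable def mdl (B : Matrix (Fin n) (Fin n) ℝ) (A : Matrix (Fin m) (Fin n) ℝ)
    (b : Fin m → ℝ) (N : (Fin n → ℝ) → ℝ) (lam L : ℝ) (y x : Fin n → ℝ) : ℝ :=
  fls A b y + ip B (gradf B A b y) (x - y) + (L / 2) * (normu B (x - y)) ^ 2 + lam * N x

/-- `xp = Prox_{λ,L}(y)`, i.e. `xp` minimizes `m_{λ,L}(y, ·)`. -/
def IsProx (B : Matrix (Fin n) (Fin n) ℝ) (A : Matrix (Fin m) (Fin n) ℝ)
    (b : Fin m → ℝ) (N : (Fin n → ℝ) → ℝ) (lam L : ℝ) (y xp : Fin n → ℝ) : Prop :=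
  ∀ u, mdl B A b N lam L y xp ≤ mdl B A b N lam L y u

/-- `ω_λ(x) = min_{ξ ∈ ∂N(x)} ‖λ ξ + ∇f(x)‖*`. -/
noncomputable def omega (B : Matrix (Fin n) (Fin n) ℝ) (A : Matrix (Fin m) (Fin n) ℝ)
    (b : Fin m → ℝ) (N : (Fin n → ℝ) → ℝ) (lam : ℝ) (x : Fin n → ℝ) : ℝ :=
  sInf ((fun ξ => dualNorm B N (lam • ξ + gradf B A b x)) '' subdiff B N x)

/-- Assumption 1 of the paper, phrased for given valid restricted isometry constants
`ρlow = ρ₋(A, c k₀ (1+γ)²)`, `ρlow2 = ρ₋(A, 72 r c k₀ (1+γ) γinc)` and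
`ρup2 = ρ₊(A, 72 r c k₀ (1+γ) γinc)`. -/
def Assumption1 (B : Matrix (Fin n) (Fin n) ℝ) (N : (Fin n → ℝ) → ℝ)
    (A : Matrix (Fin m) (Fin n) ℝ) (z : Fin m → ℝ)
    (c k₀ γinc lamtgt r δ γ ρlow ρlow2 ρup2 : ℝ) : Prop :=
  dualNorm B N ((Astar B A).mulVec z) ≤ lamtgt / 4 ∧
  1 < r ∧ 0 < δ ∧ δ ≤ 1 / 4 ∧
  γ = (lamtgt * (1 + δ) + dualNorm B N ((Astar B A).mulVec z)) /
      (lamtgt * (1 - δ) - dualNorm B N ((Astar B A).mulVec z)) ∧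
  IsLowerRIP B N A (c * k₀ * (1 + γ) ^ 2) ρlow ∧
  IsLowerRIP B N A (72 * r * c * k₀ * (1 + γ) * γinc) ρlow2 ∧
  IsUpperRIP B N A (72 * r * c * k₀ * (1 + γ) * γinc) ρup2 ∧
  ρlow / ρup2 > c / r

/-- One backtracking step: `M` is the smallest element of `{Lt γinc^j : j ≥ 0}`
for which the proximal point is accepted, and `xt1` is that proximal point. -/
def BacktrackMin (B : Matrix (Fin n) (Fin n) ℝ) (A : Matrix (Fin m) (Fin n) ℝ)
    (b : Fin m → ℝ) (N : (Fin n → ℝ) → ℝ) (lam γinc Lt : ℝ)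
    (xt : Fin n → ℝ) (M : ℝ) (xt1 : Fin n → ℝ) : Prop :=
  (∃ j : ℕ, M = Lt * γinc ^ j) ∧
  IsProx B A b N lam M xt xt1 ∧
  phi A b N lam xt1 ≤ mdl B A b N lam M xt xt1 ∧
  ∀ j : ℕ, Lt * γinc ^ j < M →
    ∀ u, IsProx B A b N lam (Lt * γinc ^ j) xt u →
      ¬ phi A b N lam u ≤ mdl B A b N lam (Lt * γinc ^ j) xt u

/-- The iterates of the proximal-gradient subroutine with backtracking. -/
structure ProxGradSeq (B : Matrix (Fin n) (Fin n) ℝ) (A : Matrix (Fin m) (Fin n) ℝ)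
    (b : Fin m → ℝ) (N : (Fin n → ℝ) → ℝ) (lam γinc γdec Lmin : ℝ)
    (x : ℕ → Fin n → ℝ) (L M : ℕ → ℝ) : Prop where
  step : ∀ t, BacktrackMin B A b N lam γinc (L t) (x t) (M (t + 1)) (x (t + 1))
  Lupdate : ∀ t, L (t + 1) = max Lmin (M (t + 1) / γdec)

/-- The quantity `‖M (x⁻ - x) + ∇f(x) - ∇f(x⁻)‖*` used in the stopping criterion. -/
noncomputable def stopQ (B : Matrix (Fin n) (Fin n) ℝ) (A : Matrix (Fin m) (Fin n) ℝ)
    (b : Fin m → ℝ) (N : (Fin n → ℝ) → ℝ) (Mt : ℝ) (xprev xcur : Fin n → ℝ) : ℝ :=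
  dualNorm B N (Mt • (xprev - xcur) + (gradf B A b xcur - gradf B A b xprev))


section Aux

variable {B : Matrix (Fin n) (Fin n) ℝ} {N : (Fin n → ℝ) → ℝ}

/-! ### Algebra of the inner product -/

lemma ip_add_left (x y w : Fin n → ℝ) : ip B (x + y) w = ip B x w + ip B y w := by
  simp [ip, add_dotProduct]

lemma ip_add_right (x y w : Fin n → ℝ) : ip B w (x + y) = ip B w x + ip B w y := by
  simp [ip, mulVec_add, dotProduct_add]

lemma ip_smul_left (t : ℝ) (x w : Fin n → ℝ) : ip B (t • x) w = t * ip B x w := by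
  simp [ip]

lemma ip_smul_right (t : ℝ) (x w : Fin n → ℝ) : ip B w (t • x) = t * ip B w x := by
  simp [ip, mulVec_smul]

lemma ip_sub_left (x y w : Fin n → ℝ) : ip B (x - y) w = ip B x w - ip B y w := by
  simp [ip, sub_dotProduct]

lemma ip_sub_right (x y w : Fin n → ℝ) : ip B w (x - y) = ip B w x - ip B w y := by
  simp [ip, mulVec_sub, dotProduct_sub]

lemma ip_zero_left (w : Fin n → ℝ) : ip B 0 w = 0 := by simp [ip]

lemma ip_zero_right (w : Fin n → ℝ) : ip B w 0 = 0 := by simp [ip]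

lemma ip_sum_left {ι : Type*} (s : Finset ι) (f : ι → Fin n → ℝ) (w : Fin n → ℝ) :
    ip B (∑ i ∈ s, f i) w = ∑ i ∈ s, ip B (f i) w := by
  simp [ip, sum_dotProduct]

lemma ip_comm (hB : B.PosDef) (x y : Fin n → ℝ) : ip B x y = ip B y x := by
  have hT : Bᵀ = B := by simpa using hB.isHermitian.eq
  unfold ip
  rw [dotProduct_mulVec, ← mulVec_transpose, hT, dotProduct_comm]

lemma ip_self_pos (hB : B.PosDef) {x : Fin n → ℝ} (hx : x ≠ 0) : 0 < ip B x x := by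
  simpa [ip] using hB.dotProduct_mulVec_pos hx

lemma ip_self_nonneg (hB : B.PosDef) (x : Fin n → ℝ) : 0 ≤ ip B x x := by
  by_cases hx : x = 0
  · simp [hx, ip_zero_left]
  · exact (ip_self_pos hB hx).le

lemma eq_zero_of_ip_self (hB : B.PosDef) {x : Fin n → ℝ} (h : ip B x x = 0) : x = 0 := by
  by_contra hx
  exact (ip_self_pos hB hx).ne' h

lemma normu_sq (hB : B.PosDef) (x : Fin n → ℝ) : normu B x ^ 2 = ip B x x :=
  Real.sq_sqrt (ip_self_nonneg hB x)

/-- The Cauchy–Schwarz inequality for `ip`. -/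
lemma ip_sq_le (hB : B.PosDef) (x y : Fin n → ℝ) : ip B x y ^ 2 ≤ ip B x x * ip B y y := by
  by_cases hy : y = 0
  · simp [hy, ip_zero_right]
  have hpos := ip_self_pos hB hy
  have h := ip_self_nonneg hB (ip B y y • x - ip B x y • y)
  simp only [ip_sub_left, ip_sub_right, ip_smul_left, ip_smul_right, ip_comm hB y x] at h
  have h2 : 0 ≤ ip B y y * (ip B x x * ip B y y - ip B x y ^ 2) := by nlinarith
  have := nonneg_of_mul_nonneg_right h2 hpos
  linarith

lemma perp_add {T : Submodule ℝ (Fin n → ℝ)} {v w : Fin n → ℝ} (hv : v ∈ perp B T)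
    (hw : w ∈ perp B T) : v + w ∈ perp B T := fun u hu => by
  rw [ip_add_right, hv u hu, hw u hu, add_zero]

lemma perp_sub {T : Submodule ℝ (Fin n → ℝ)} {v w : Fin n → ℝ} (hv : v ∈ perp B T)
    (hw : w ∈ perp B T) : v - w ∈ perp B T := fun u hu => by
  rw [ip_sub_right, hv u hu, hw u hu, sub_zero]

lemma perp_smul {T : Submodule ℝ (Fin n → ℝ)} {v : Fin n → ℝ} (t : ℝ) (hv : v ∈ perp B T) :
    t • v ∈ perp B T := fun u hu => by
  rw [ip_smul_right, hv u hu, mul_zero]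

lemma perp_zero {T : Submodule ℝ (Fin n → ℝ)} : (0 : Fin n → ℝ) ∈ perp B T := fun u _ =>
  ip_zero_right u

lemma perp_sum {ι : Type*} {T : Submodule ℝ (Fin n → ℝ)} (s : Finset ι) (f : ι → Fin n → ℝ)
    (h : ∀ i ∈ s, f i ∈ perp B T) : ∑ i ∈ s, f i ∈ perp B T := by
  classical
  induction s using Finset.induction_on with
  | empty => simpa using perp_zero
  | insert i s hi ih =>
    rw [Finset.sum_insert hi]
    exact perp_add (h i (by simp)) (ih fun j hj => h j (by simp [hj]))

/-! ### The unit ball, its extreme points, and the dual norm -/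

lemma IsNorm.zero (hN : IsNorm N) : N 0 = 0 := (hN.eq_zero_iff 0).2 rfl

lemma IsNorm.neg (hN : IsNorm N) (x : Fin n → ℝ) : N (-x) = N x := by
  simpa using hN.smul_eq (-1) x

lemma IsNorm.sum_le (hN : IsNorm N) {ι : Type*} (s : Finset ι) (f : ι → Fin n → ℝ) :
    N (∑ i ∈ s, f i) ≤ ∑ i ∈ s, N (f i) := by
  classical
  induction s using Finset.induction_on with
  | empty => simp [hN.zero]
  | insert i s hi ih =>
    rw [Finset.sum_insert hi, Finset.sum_insert hi]
    linarith [hN.triangle (f i) (∑ i ∈ s, f i)]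

lemma IsNorm.continuous (hN : IsNorm N) : Continuous N := by
  have hC : ∀ x, N x ≤ (∑ i, N (Pi.single i 1)) * ‖x‖ := fun x => by
    calc N x = N (∑ i, x i • (Pi.single i 1 : Fin n → ℝ)) := by
          congr 1
          exact pi_eq_sum_univ' x
      _ ≤ ∑ i, N (x i • (Pi.single i 1 : Fin n → ℝ)) := hN.sum_le _ _
      _ = ∑ i, |x i| * N (Pi.single i 1) := by simp [hN.smul_eq]
      _ ≤ ∑ i, ‖x‖ * N (Pi.single i 1) := Finset.sum_le_sum fun i _ =>
          mul_le_mul_of_nonneg_right (norm_le_pi_norm x i) (hN.nonneg _)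
      _ = _ := by rw [← Finset.mul_sum, mul_comm]
  refine (LipschitzWith.of_dist_le' (K := ∑ i, N (Pi.single i 1)) fun x y => ?_).continuous
  rw [Real.dist_eq, dist_eq_norm]
  have h1 := hN.triangle (x - y) y
  have h2 := hN.triangle (y - x) x
  have h3 := hN.neg (x - y)
  rw [neg_sub] at h3
  rw [sub_add_cancel] at h1 h2
  refine le_trans ?_ (hC (x - y))
  rw [abs_le]
  constructor <;> linarith

lemma IsNorm.isCompact_ball (hN : IsNorm N) : IsCompact {x | N x ≤ 1} := by
  refine Metric.isCompact_of_isClosed_isBounded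
    (isClosed_le hN.continuous continuous_const) ?_
  by_cases hne : (Metric.sphere (0 : Fin n → ℝ) 1).Nonempty
  · obtain ⟨y, hy, hmin⟩ := (isCompact_sphere (0 : Fin n → ℝ) 1).exists_isMinOn hne
      hN.continuous.continuousOn
    have hy1 : ‖y‖ = 1 := by simpa using hy
    have hy0 : 0 < N y := lt_of_le_of_ne (hN.nonneg y) fun h => by
      rw [(hN.eq_zero_iff y).1 h.symm] at hy1
      simp at hy1
    refine isBounded_iff_forall_norm_le.2 ⟨1 / N y, fun x hx => ?_⟩
    by_cases hx0 : x = 0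
    · simp only [hx0, norm_zero]; positivity
    have hxn : 0 < ‖x‖ := norm_pos_iff.2 hx0
    have h := hmin (show ‖x‖⁻¹ • x ∈ Metric.sphere (0 : Fin n → ℝ) 1 by
      simp [norm_smul, hxn.ne'])
    simp only [Set.mem_ofPred_eq, hN.smul_eq, abs_inv, abs_norm] at h hx
    rw [le_div_iff₀ hy0]
    calc ‖x‖ * N y ≤ ‖x‖ * (‖x‖⁻¹ * N x) := by gcongr
      _ = N x := by field_simp
      _ ≤ 1 := hx
  · refine isBounded_iff_forall_norm_le.2 ⟨0, fun x _ => ?_⟩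
    by_contra h
    have hxn : 0 < ‖x‖ := not_le.1 h
    exact hne ⟨‖x‖⁻¹ • x, by simp [norm_smul, hxn.ne']⟩

lemma continuous_ip (y : Fin n → ℝ) : Continuous fun x => ip B y x := by
  unfold ip
  fun_prop

/-- A bound for a linear functional on the unit ball extends by homogeneity. -/
lemma ip_le_mul (hN : IsNorm N) {w : Fin n → ℝ} {t : ℝ}
    (h : ∀ u, N u ≤ 1 → ip B w u ≤ t) (u : Fin n → ℝ) : ip B w u ≤ t * N u := by
  by_cases hu : u = 0
  · simp [hu, ip_zero_right, hN.zero]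
  have hpos : 0 < N u := lt_of_le_of_ne (hN.nonneg u) fun h => hu ((hN.eq_zero_iff u).1 h.symm)
  have h1 := h ((N u)⁻¹ • u) (by
    rw [hN.smul_eq, abs_of_pos (inv_pos.2 hpos), inv_mul_cancel₀ hpos.ne'])
  rw [ip_smul_right, inv_mul_le_iff₀ hpos] at h1
  linarith

lemma ip_le_dualNorm (hN : IsNorm N) (y u : Fin n → ℝ) :
    ip B y u ≤ dualNorm B N y * N u := by
  refine ip_le_mul hN (fun u hu => ?_) u
  exact le_csSup (hN.isCompact_ball.image (continuous_ip y)).bddAbove ⟨u, hu, rfl⟩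

lemma dualNorm_nonneg (hN : IsNorm N) (y : Fin n → ℝ) : 0 ≤ dualNorm B N y :=
  le_csSup (hN.isCompact_ball.image (continuous_ip y)).bddAbove
    ⟨0, by simp [hN.zero], ip_zero_right y⟩

lemma dualNorm_le_one_iff (hN : IsNorm N) (y : Fin n → ℝ) :
    dualNorm B N y ≤ 1 ↔ ∀ u, ip B y u ≤ N u := by
  constructor
  · intro h u
    have := ip_le_dualNorm (B := B) hN y u
    nlinarith [hN.nonneg u]
  · intro h
    refine csSup_le ⟨_, 0, by simp [hN.zero], rfl⟩ ?_
    rintro _ ⟨u, hu, rfl⟩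
    exact (h u).trans hu

/-- The dual unit ball, described without suprema. -/
def DB (B : Matrix (Fin n) (Fin n) ℝ) (N : (Fin n → ℝ) → ℝ) (y : Fin n → ℝ) : Prop :=
  ∀ u, ip B y u ≤ N u

lemma DB.abs_le (hN : IsNorm N) {y : Fin n → ℝ} (h : DB B N y) (u : Fin n → ℝ) :
    -N u ≤ ip B y u := by
  have := h (-u)
  rw [hN.neg, show -u = (-1 : ℝ) • u by simp, ip_smul_right] at this
  linarith

lemma DB.neg (hN : IsNorm N) {y : Fin n → ℝ} (h : DB B N y) : DB B N (-y) := fun u => by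
  have := h.abs_le hN u
  rw [show -y = (-1 : ℝ) • y by simp, ip_smul_left]
  linarith

/-- A linear functional attains its maximum over the unit ball at an extreme point. -/
lemma exists_extPt_max (hN : IsNorm N) (w : Fin n → ℝ) :
    ∃ a ∈ extPts N, ∀ u, ip B w u ≤ ip B w a * N u := by
  let l : (Fin n → ℝ) →L[ℝ] ℝ := LinearMap.toContinuousLinearMap
    { toFun := fun x => ip B w x
      map_add' := fun x y => ip_add_right x y w
      map_smul' := fun t x => ip_smul_right t x w }
  have hl : ∀ u, l u = ip B w u := fun u => rfl
  have hexp : IsExposed ℝ {x | N x ≤ 1} (l.toExposed {x | N x ≤ 1}) :=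
    ContinuousLinearMap.toExposed.isExposed
  obtain ⟨y, hy, hmax⟩ := hN.isCompact_ball.exists_isMaxOn
    ⟨0, by simp [hN.zero]⟩ l.continuous.continuousOn
  have hcomp : IsCompact (l.toExposed {x | N x ≤ 1}) := hexp.isCompact hN.isCompact_ball
  obtain ⟨a, ha⟩ := hcomp.extremePoints_nonempty ⟨y, hy, fun u hu => hmax hu⟩
  refine ⟨a, hexp.isExtreme.extremePoints_subset_extremePoints ha, ip_le_mul hN fun u hu => ?_⟩
  exact (extremePoints_subset ha).2 u hu

/-- Since extreme points have unit `‖·‖ᵤ`-norm, `‖u‖ᵤ ≤ ‖u‖` for every `u`. -/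
lemma ip_self_le (hB : B.PosDef) (hN : IsNorm N) (hExt : ∀ a ∈ extPts N, normu B a = 1)
    (u : Fin n → ℝ) : ip B u u ≤ N u ^ 2 := by
  obtain ⟨a, ha, hmax⟩ := exists_extPt_max (B := B) hN u
  have ha1 : ip B a a = 1 := by rw [← normu_sq hB, hExt a ha, one_pow]
  have h1 := hmax u
  have h2 := ip_sq_le hB u a
  rw [ha1, mul_one] at h2
  by_cases hu : u = 0
  · simp [hu, ip_zero_left, hN.zero]
  have hpos := ip_self_pos hB hu
  have h3 : ip B u u * ip B u u ≤ ip B u u * N u ^ 2 :=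
    calc ip B u u * ip B u u ≤ (ip B u a * N u) * (ip B u a * N u) :=
          mul_self_le_mul_self hpos.le h1
      _ = ip B u a ^ 2 * N u ^ 2 := by ring
      _ ≤ ip B u u * N u ^ 2 := by gcongr
  exact le_of_mul_le_mul_left h3 hpos

lemma ext_ip_self (hB : B.PosDef) (hExt : ∀ a ∈ extPts N, normu B a = 1) {a : Fin n → ℝ} (ha : a ∈ extPts N) : ip B a a = 1 := by
  rw [← normu_sq hB, hExt a ha, one_pow]

section Ext
variable (hB : B.PosDef) (hN : IsNorm N) (hExt : ∀ a ∈ extPts N, normu B a = 1)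
include hB hN hExt

lemma ext_N {a : Fin n → ℝ} (ha : a ∈ extPts N) : N a = 1 := by
  have h1 : a ∈ {x | N x ≤ 1} := extremePoints_subset ha
  have h1' : N a ≤ 1 := h1
  have h2 := ip_self_le hB hN hExt a
  rw [ext_ip_self hB hExt ha] at h2
  nlinarith [hN.nonneg a]

lemma ext_DB {a : Fin n → ℝ} (ha : a ∈ extPts N) : DB B N a := fun u => by
  have h1 := ip_sq_le hB a u
  rw [ext_ip_self hB hExt ha, one_mul] at h1
  exact le_of_sq_le_sq (h1.trans (ip_self_le hB hN hExt u)) (hN.nonneg u)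

end Ext

/-! ### Subdifferentials of a decomposable norm -/

lemma mem_subdiff_iff (hN : IsNorm N) (x ξ : Fin n → ℝ) :
    ξ ∈ subdiff B N x ↔ DB B N ξ ∧ ip B ξ x = N x := by
  constructor
  · intro h
    have h0 := h 0
    have h2 := h (2 • x)
    have h2N : N (2 • x) = 2 * N x := by
      have := hN.smul_eq 2 x
      rw [abs_two] at this
      rw [← this]
      norm_num [two_smul]
    rw [h2N, two_smul, add_sub_cancel_right] at h2
    rw [hN.zero, ip_sub_right, ip_zero_right] at h0
    have hx : ip B ξ x = N x := by linarith
    refine ⟨fun u => ?_, hx⟩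
    have := h u
    rw [ip_sub_right] at this
    linarith
  · rintro ⟨h, hx⟩ y
    rw [ip_sub_right]
    linarith [h y]

lemma mem_subdiff_D (hN : IsNorm N) (D : DecompStruct B N) (x ξ : Fin n → ℝ) :
    (DB B N ξ ∧ ip B ξ x = N x) ↔ ∃ v ∈ perp B (D.T x), DB B N v ∧ ξ = D.e x + v := by
  rw [← mem_subdiff_iff hN, D.subdiff_eq]
  simp only [Set.mem_ofPred_eq, dualNorm_le_one_iff hN]
  rfl

lemma e_DB (hN : IsNorm N) (D : DecompStruct B N) (x : Fin n → ℝ) :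
    DB B N (D.e x) ∧ ip B (D.e x) x = N x :=
  (mem_subdiff_D hN D x _).2 ⟨0, perp_zero, fun u => by rw [ip_zero_left]; exact hN.nonneg u,
    (add_zero _).symm⟩

/-- `e x` is the element of `∂‖x‖` of least `‖·‖ᵤ`-norm. -/
lemma K_le (hB : B.PosDef) (hN : IsNorm N) (D : DecompStruct B N) {x ξ : Fin n → ℝ}
    (h : DB B N ξ) (hx : ip B ξ x = N x) : ip B (D.e x) (D.e x) ≤ ip B ξ ξ := by
  obtain ⟨v, hv, -, rfl⟩ := (mem_subdiff_D hN D x ξ).1 ⟨h, hx⟩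
  have h1 := hv _ (D.e_mem x)
  rw [ip_add_left, ip_add_right, ip_add_right, ip_comm hB v, h1]
  linarith [ip_self_nonneg hB v]

section Ext
variable (hB : B.PosDef) (hN : IsNorm N) (hExt : ∀ a ∈ extPts N, normu B a = 1)
  (D : DecompStruct B N)
include hB hN hExt

lemma e_ext {a : Fin n → ℝ} (ha : a ∈ extPts N) : D.e a = a := by
  obtain ⟨v, hv, -, h⟩ := (mem_subdiff_D hN D a a).1
    ⟨ext_DB hB hN hExt ha, by rw [ext_ip_self hB hExt ha, ext_N hB hN hExt ha]⟩
  have h1 := hv _ (D.e_mem a)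
  have h2 := (e_DB hN D a).2
  rw [ext_N hB hN hExt ha] at h2
  have h3 : ip B (D.e a) (D.e a) = 1 := by
    have : ip B (D.e a) a = ip B (D.e a) (D.e a + v) := by rw [← h]
    rw [ip_add_right, h1, add_zero] at this
    linarith
  have h4 : ip B v v = 0 := by
    have := ext_ip_self hB hExt ha
    rw [h, ip_add_left, ip_add_right, ip_add_right, ip_comm hB v, h1, h3] at this
    linarith
  rw [eq_zero_of_ip_self hB h4, add_zero] at h
  exact h.symm

lemma ext_mem_T {a : Fin n → ℝ} (ha : a ∈ extPts N) : a ∈ D.T a := by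
  have := D.e_mem a
  rwa [e_ext hB hN hExt D ha] at this

/-- A point of the dual ball exposing the atom `a` splits as `a` plus a point of the dual ball
orthogonal to `T a`. -/
lemma split_ext {a y : Fin n → ℝ} (ha : a ∈ extPts N) (hy : DB B N y) (h : ip B y a = 1) :
    y - a ∈ perp B (D.T a) ∧ DB B N (y - a) := by
  obtain ⟨v, hv, hv2, hyv⟩ := (mem_subdiff_D hN D a y).1
    ⟨hy, by rw [h, ext_N hB hN hExt ha]⟩
  rw [e_ext hB hN hExt D ha] at hyv
  rw [hyv, add_sub_cancel_left]
  exact ⟨hv, hv2⟩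

lemma join_ext {a v : Fin n → ℝ} (ha : a ∈ extPts N) (hv : v ∈ perp B (D.T a))
    (hv2 : DB B N v) : DB B N (a + v) :=
  ((mem_subdiff_D hN D a _).2 ⟨v, hv, hv2, by rw [e_ext hB hN hExt D ha]⟩).1

end Ext

/-! ### Greedy orthogonal decomposition -/

/-- The first `k` steps of a singular-value-like decomposition of `x`: `x` is a combination of the
atoms `a 0, …, a (k - 1)` with positive nonincreasing coefficients `τ i`, plus a remainder `w`
whose dual norm is at most every `τ i`; the atoms and `w` are mutually orthogonal in the strong
sense of lying in each other's `(T (a i))ᗮ`. -/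
structure Peel (D : DecompStruct B N) (x : Fin n → ℝ) (k : ℕ) (a : ℕ → Fin n → ℝ) (τ : ℕ → ℝ)
    (w : Fin n → ℝ) : Prop where
  eq : x = ∑ i ∈ Finset.range k, τ i • a i + w
  ext : ∀ i < k, a i ∈ extPts N
  pos : ∀ i < k, 0 < τ i
  dual : ∀ i < k, ∀ u, ip B w u ≤ τ i * N u
  anti : ∀ i j, i ≤ j → j < k → τ j ≤ τ i
  perp_w : ∀ i < k, w ∈ perp B (D.T (a i))
  perp_a : ∀ i < k, ∀ j < k, i ≠ j → a j ∈ perp B (D.T (a i))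

section Ext
variable (hB : B.PosDef) (hN : IsNorm N) (hExt : ∀ a ∈ extPts N, normu B a = 1)
  (D : DecompStruct B N)
include hB hN hExt

/-- A nonzero remainder yields one more atom: an extreme point at which the remainder attains its
dual norm. -/
lemma Peel.step {x : Fin n → ℝ} {k : ℕ} {a : ℕ → Fin n → ℝ} {τ : ℕ → ℝ} {w : Fin n → ℝ}
    (P : Peel D x k a τ w) (hw : w ≠ 0) :
    ∃ a' τ' w', Peel D x (k + 1) a' τ' w' := by
  obtain ⟨b, hb, hmax⟩ := exists_extPt_max (B := B) hN w
  set t := ip B w b with ht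
  have htpos : 0 < t := by
    have h1 := hmax w
    have h2 := ip_self_pos hB hw
    by_contra hcon
    nlinarith [hN.nonneg w]
  set y := t⁻¹ • w with hy
  have hyw : t • y = w := by rw [hy, smul_smul, mul_inv_cancel₀ htpos.ne', one_smul]
  have hyDB : DB B N y := fun u => by
    rw [hy, ip_smul_left, inv_mul_le_iff₀ htpos]
    exact hmax u
  have hyb : ip B y b = 1 := by rw [hy, ip_smul_left, ← ht, inv_mul_cancel₀ htpos.ne']
  obtain ⟨hv1, hv2⟩ := split_ext hB hN hExt D hb hyDB hyb
  have htle : ∀ i < k, t ≤ τ i := fun i hi => by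
    have := P.dual i hi b
    rwa [ext_N hB hN hExt hb, mul_one] at this
  have key : ∀ i < k, b ∈ perp B (D.T (a i)) ∧ y - b ∈ perp B (D.T (a i)) ∧
      a i ∈ perp B (D.T b) := fun i hi => by
    have hai := P.ext i hi
    have hyp : y ∈ perp B (D.T (a i)) := perp_smul _ (P.perp_w i hi)
    have hj := join_ext hB hN hExt D hai hyp hyDB
    -- `-y` is as admissible as `y`, so `b`, which saturates `y`, is orthogonal to `a i`.
    have hj' : DB B N (-(a i + -y)) :=
      (join_ext hB hN hExt D hai (by simpa using perp_smul (-1) hyp) (hyDB.neg hN)).neg hN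
    have hab : ip B (a i) b = 0 := by
      have h1 := hj b
      have h2 := hj' b
      rw [show -(a i + -y) = y - a i by abel, ip_sub_left] at h2
      rw [ip_add_left] at h1
      rw [hyb, ext_N hB hN hExt hb] at h1 h2
      linarith
    obtain ⟨h3, h4⟩ := split_ext hB hN hExt D hb hj (by rw [ip_add_left, hab, hyb, zero_add])
    have hay : ip B y (a i) = 0 := by
      rw [ip_comm hB]
      exact hyp _ (ext_mem_T hB hN hExt D hai)
    obtain ⟨h5, -⟩ := split_ext hB hN hExt D hai h4 (by
      rw [ip_sub_left, ip_add_left, hay, ip_comm hB b, hab, ext_ip_self hB hExt hai]; ring)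
    have e1 : a i + y - b - a i = y - b := by abel
    rw [e1] at h5
    refine ⟨?_, h5, ?_⟩
    · simpa using perp_sub hyp h5
    · have := perp_sub h3 hv1
      rwa [show a i + y - b - (y - b) = a i by abel] at this
  refine ⟨fun i => if i < k then a i else b, fun i => if i < k then τ i else t, t • (y - b), ?_⟩
  have hcase : ∀ i, i < k + 1 → i < k ∨ i = k := fun i hi => by omega
  constructor
  · rw [Finset.sum_range_succ]
    have : ∑ i ∈ Finset.range k, (if i < k then τ i else t) • (if i < k then a i else b) =
        ∑ i ∈ Finset.range k, τ i • a i := Finset.sum_congr rfl fun i hi => by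
      simp [Finset.mem_range.1 hi]
    rw [this]
    simp only [lt_irrefl, if_false]
    rw [smul_sub, hyw, add_assoc, add_sub_cancel]
    exact P.eq
  · intro i hi
    rcases hcase i hi with h | rfl
    · simpa [h] using P.ext i h
    · simpa using hb
  · intro i hi
    rcases hcase i hi with h | rfl
    · simpa [h] using P.pos i h
    · simpa using htpos
  · intro i hi u
    have h1 : ip B (t • (y - b)) u ≤ t * N u := by
      rw [ip_smul_left]
      exact mul_le_mul_of_nonneg_left (hv2 u) htpos.le
    rcases hcase i hi with h | rfl
    · simp only [h, if_true]
      exact h1.trans (mul_le_mul_of_nonneg_right (htle i h) (hN.nonneg u))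
    · simpa using h1
  · intro i j hij hj
    rcases hcase j hj with h | rfl
    · simpa [h, lt_of_le_of_lt hij h] using P.anti i j hij h
    · by_cases h : i < j
      · simpa [h] using htle i h
      · simp [h]
  · intro i hi
    rcases hcase i hi with h | rfl
    · simpa [h] using perp_smul t (key i h).2.1
    · simpa using perp_smul t hv1
  · intro i hi j hj hij
    rcases hcase i hi with h | rfl <;> rcases hcase j hj with h' | rfl
    · simpa [h, h'] using P.perp_a i h j h' hij
    · simpa [h] using (key i h).1
    · simpa [h'] using (key j h').2.2
    · exact absurd rfl hij

lemma Peel.ip_a {x : Fin n → ℝ} {k : ℕ} {a : ℕ → Fin n → ℝ} {τ : ℕ → ℝ} {w : Fin n → ℝ}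
    (P : Peel D x k a τ w) {i j : ℕ} (hi : i < k) (hj : j < k) :
    ip B (a i) (a j) = if i = j then 1 else 0 := by
  split_ifs with h
  · rw [← h, ext_ip_self hB hExt (P.ext i hi)]
  · exact P.perp_a i hi j hj h _ (ext_mem_T hB hN hExt D (P.ext i hi))

/-- Orthonormality of the atoms bounds their number by the dimension. -/
lemma Peel.le_dim {x : Fin n → ℝ} {k : ℕ} {a : ℕ → Fin n → ℝ} {τ : ℕ → ℝ} {w : Fin n → ℝ}
    (P : Peel D x k a τ w) : k ≤ n := by
  have hli : LinearIndependent ℝ (fun i : Fin k => a i) := by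
    rw [Fintype.linearIndependent_iff]
    intro g hg j
    have h1 : ip B (∑ i, g i • a i) (a j) = 0 := by rw [hg, ip_zero_left]
    rw [ip_sum_left] at h1
    simpa [ip_smul_left, P.ip_a hB hN hExt D (Fin.is_lt _) (Fin.is_lt _), Fin.val_inj] using h1
  simpa using hli.fintype_card_le_finrank

lemma exists_peel (x : Fin n → ℝ) : ∃ k a τ, Peel D x k a τ 0 := by
  by_contra hcon
  have hall : ∀ k, ∃ a τ w, Peel D x k a τ w := fun k => by
    induction k with
    | zero =>
      refine ⟨fun _ => 0, fun _ => 0, x, ?_⟩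
      constructor <;> simp
    | succ k ih =>
      obtain ⟨a, τ, w, P⟩ := ih
      refine P.step hB hN hExt D ?_
      rintro rfl
      exact hcon ⟨k, a, τ, P⟩
  obtain ⟨a, τ, w, P⟩ := hall (n + 1)
  have := P.le_dim hB hN hExt D
  omega

/-- Combinations of the atoms with coefficients in `[0, 1]` stay in the dual ball. -/
lemma Peel.DB_sum {x : Fin n → ℝ} {k : ℕ} {a : ℕ → Fin n → ℝ} {τ : ℕ → ℝ} {w : Fin n → ℝ}
    (P : Peel D x k a τ w) (c : ℕ → ℝ) (F : Finset ℕ) (hF : ∀ i ∈ F, i < k)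
    (hc : ∀ i ∈ F, 0 ≤ c i ∧ c i ≤ 1) : DB B N (∑ i ∈ F, c i • a i) := by
  induction F using Finset.induction_on with
  | empty =>
    intro u
    rw [Finset.sum_empty, ip_zero_left]
    exact hN.nonneg u
  | insert j F hj ih =>
    have ih' := ih (fun i hi => hF i (by simp [hi])) (fun i hi => hc i (by simp [hi]))
    have hjk := hF j (by simp)
    obtain ⟨hc0, hc1⟩ := hc j (by simp)
    have hperp : ∑ i ∈ F, c i • a i ∈ perp B (D.T (a j)) := perp_sum _ _ fun i hi =>
      perp_smul _ (P.perp_a j hjk i (hF i (by simp [hi])) (by rintro rfl; exact hj hi))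
    have hjoin := join_ext hB hN hExt D (P.ext j hjk) hperp ih'
    intro u
    have h1 := hjoin u
    have h2 := ih' u
    rw [Finset.sum_insert hj, ip_add_left, ip_smul_left]
    rw [ip_add_left] at h1
    nlinarith

/-- In a complete decomposition of `x`, every subgradient of `N` at `x` pairs to `1` with every
atom. -/
lemma Peel.subgrad {x : Fin n → ℝ} {k : ℕ} {a : ℕ → Fin n → ℝ} {τ : ℕ → ℝ}
    (P : Peel D x k a τ 0) {ξ : Fin n → ℝ} (h : DB B N ξ) (hx : ip B ξ x = N x) :
    ∀ i < k, ip B ξ (a i) = 1 := by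
  have hxe : x = ∑ i ∈ Finset.range k, τ i • a i := by simpa using P.eq
  have h1 : N x ≤ ∑ i ∈ Finset.range k, τ i := by
    conv_lhs => rw [hxe]
    refine (hN.sum_le _ _).trans (Finset.sum_le_sum fun i hi => ?_)
    have hi := Finset.mem_range.1 hi
    rw [hN.smul_eq, ext_N hB hN hExt (P.ext i hi), abs_of_pos (P.pos i hi), mul_one]
  have hq := P.DB_sum hB hN hExt D (fun _ => 1) (Finset.range k)
    (fun i hi => Finset.mem_range.1 hi) (fun i _ => by norm_num)
  have h2 : ip B x ξ = ∑ i ∈ Finset.range k, τ i * ip B (a i) ξ := by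
    conv_lhs => rw [hxe]
    simp [ip_sum_left, ip_smul_left]
  have h3 : ip B (∑ i ∈ Finset.range k, (1 : ℝ) • a i) x = ∑ i ∈ Finset.range k, τ i := by
    rw [ip_comm hB]
    conv_lhs => rw [hxe]
    rw [ip_sum_left]
    refine Finset.sum_congr rfl fun i hi => ?_
    have hi' := Finset.mem_range.1 hi
    rw [ip_smul_left, ip_comm hB, ip_sum_left]
    simp only [one_smul]
    rw [Finset.sum_congr rfl fun j hj => P.ip_a hB hN hExt D (Finset.mem_range.1 hj) hi']
    simp [hi']
  have h4 := hq x
  rw [h3] at h4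
  have hle : ∀ i ∈ Finset.range k, τ i * ip B (a i) ξ ≤ τ i := fun i hi => by
    have hi := Finset.mem_range.1 hi
    have := h (a i)
    rw [ext_N hB hN hExt (P.ext i hi), ip_comm hB] at this
    nlinarith [P.pos i hi]
  have heq : ∑ i ∈ Finset.range k, τ i * ip B (a i) ξ = ∑ i ∈ Finset.range k, τ i := by
    rw [← h2, ip_comm hB, hx]
    linarith
  intro i hi
  have := (Finset.sum_eq_sum_iff_of_le hle).1 heq i (Finset.mem_range.2 hi)
  rw [ip_comm hB]
  exact mul_left_cancel₀ (P.pos i hi).ne' (this.trans (mul_one _).symm)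

/-- The Gram sum `‖a 0 + ⋯ + a (s - 1)‖ᵤ² = s`. -/
lemma Peel.ip_sum {x : Fin n → ℝ} {k : ℕ} {a : ℕ → Fin n → ℝ} {τ : ℕ → ℝ} {w : Fin n → ℝ}
    (P : Peel D x k a τ w) {s : ℕ} (hs : s ≤ k) :
    ip B (∑ i ∈ Finset.range s, a i) (∑ i ∈ Finset.range s, a i) = s := by
  rw [ip_sum_left]
  have : ∀ i ∈ Finset.range s, ip B (a i) (∑ j ∈ Finset.range s, a j) = 1 := fun i hi => by
    have hi' := Finset.mem_range.1 hi
    rw [ip_comm hB, ip_sum_left, Finset.sum_congr rfl fun j hj =>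
      P.ip_a hB hN hExt D ((Finset.mem_range.1 hj).trans_le hs) (hi'.trans_le hs)]
    simp [hi']
  rw [Finset.sum_congr rfl this]
  simp

/-- `K x` is at most the number of atoms in a complete decomposition of `x`. -/
lemma Peel.K_le {x : Fin n → ℝ} {k : ℕ} {a : ℕ → Fin n → ℝ} {τ : ℕ → ℝ}
    (P : Peel D x k a τ 0) : Kfun B N D x ≤ k := by
  have hq : DB B N (∑ i ∈ Finset.range k, a i) := by
    simpa using P.DB_sum hB hN hExt D (fun _ => 1) (Finset.range k)
      (fun i hi => Finset.mem_range.1 hi) (fun i _ => by norm_num)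
  have he := P.subgrad hB hN hExt D (e_DB hN D x).1 (e_DB hN D x).2
  have hqx : ip B (∑ i ∈ Finset.range k, a i) x = N x := by
    refine le_antisymm (hq x) ?_
    have hxe : x = ∑ i ∈ Finset.range k, τ i • a i := by simpa using P.eq
    have h2 : ip B x (∑ i ∈ Finset.range k, a i) = ip B x (D.e x) := by
      have hR : ∀ y, ip B x y = ∑ i ∈ Finset.range k, ip B (τ i • a i) y := fun y => by
        rw [← ip_sum_left, ← hxe]
      rw [hR, hR]
      refine Finset.sum_congr rfl fun i hi => ?_
      have hi' := Finset.mem_range.1 hi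
      rw [ip_smul_left, ip_smul_left, ip_comm hB _ (D.e x), he i hi', ip_comm hB, ip_sum_left,
        Finset.sum_congr rfl fun j hj => P.ip_a hB hN hExt D (Finset.mem_range.1 hj) hi']
      simp [hi']
    rw [ip_comm hB, h2, ip_comm hB, (e_DB hN D x).2]
  have := PGH.K_le hB hN D hq hqx
  rw [P.ip_sum hB hN hExt D le_rfl] at this
  rwa [Kfun, normu_sq hB]

/-- The sum of the top `s` atoms maximizes `⟪x, ·⟫` over the vectors in the dual ball of norm at
most `s`. -/
lemma Peel.top {x : Fin n → ℝ} {k : ℕ} {a : ℕ → Fin n → ℝ} {τ : ℕ → ℝ}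
    (P : Peel D x k a τ 0) {s : ℕ} (hs : s ≤ k) (hs0 : 0 < s) {q : Fin n → ℝ} (hq : DB B N q)
    (hqs : N q ≤ s) : ip B x q ≤ ip B x (∑ i ∈ Finset.range s, a i) := by
  have hxe : x = ∑ i ∈ Finset.range k, τ i • a i := by simpa using P.eq
  set θ := τ (s - 1) with hθ
  have hθpos : 0 < θ := P.pos _ (by omega)
  set c : ℕ → ℝ := fun i => if i < s then 1 else τ i / θ with hc
  have hd := P.DB_sum hB hN hExt D c (Finset.range k) (fun i hi => Finset.mem_range.1 hi)
    (fun i hi => by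
      by_cases h : i < s
      · simp [hc, h]
      · simp only [hc, h, if_false]
        have hik := Finset.mem_range.1 hi
        exact ⟨(div_pos (P.pos i hik) hθpos).le,
          (div_le_one hθpos).2 (P.anti _ _ (by omega) hik)⟩) q
  rw [ip_sum_left] at hd
  simp only [ip_smul_left] at hd
  have hsplit : ∀ f : ℕ → ℝ, ∑ i ∈ Finset.range k, f i =
      ∑ i ∈ Finset.range s, f i + ∑ i ∈ Finset.Ico s k, f i := fun f =>
    (Finset.sum_range_add_sum_Ico f hs).symm
  have hL : ip B x q = ∑ i ∈ Finset.range s, τ i * ip B (a i) q +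
      ∑ i ∈ Finset.Ico s k, τ i * ip B (a i) q := by
    conv_lhs => rw [hxe]
    rw [ip_sum_left, hsplit]
    simp only [ip_smul_left]
  have hR : ip B x (∑ i ∈ Finset.range s, a i) = ∑ i ∈ Finset.range s, τ i := by
    rw [ip_comm hB, ip_sum_left]
    refine Finset.sum_congr rfl fun i hi => ?_
    have hi' := (Finset.mem_range.1 hi).trans_le hs
    rw [ip_comm hB]
    conv_lhs => rw [hxe]
    rw [ip_sum_left]
    simp only [ip_smul_left]
    rw [Finset.sum_congr rfl fun j hj => by
      rw [P.ip_a hB hN hExt D (Finset.mem_range.1 hj) hi']]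
    simp [hi']
  rw [hsplit] at hd
  have e1 : ∑ i ∈ Finset.range s, c i * ip B (a i) q = ∑ i ∈ Finset.range s, ip B (a i) q :=
    Finset.sum_congr rfl fun i hi => by simp [hc, Finset.mem_range.1 hi]
  have e2 : θ * ∑ i ∈ Finset.Ico s k, c i * ip B (a i) q =
      ∑ i ∈ Finset.Ico s k, τ i * ip B (a i) q := by
    rw [Finset.mul_sum]
    refine Finset.sum_congr rfl fun i hi => ?_
    have : ¬ i < s := not_lt.2 (Finset.mem_Ico.1 hi).1
    simp only [hc, this, if_false]
    field_simp
  have e3 : ∑ i ∈ Finset.range s, (τ i - θ) * ip B (a i) q ≤ ∑ i ∈ Finset.range s, (τ i - θ) := by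
    refine Finset.sum_le_sum fun i hi => ?_
    have hi' := Finset.mem_range.1 hi
    have h1 := hq (a i)
    rw [ext_N hB hN hExt (P.ext i (hi'.trans_le hs)), ip_comm hB] at h1
    have h2 : θ ≤ τ i := P.anti _ _ (by omega) (by omega)
    nlinarith
  simp only [sub_mul, Finset.sum_sub_distrib, ← Finset.mul_sum, Finset.sum_const,
    Finset.card_range, nsmul_eq_mul] at e3
  rw [hL, hR, ← e2]
  rw [e1] at hd
  have := mul_le_mul_of_nonneg_left (hd.trans hqs) hθpos.le
  linarith

end Ext

/-! ### Proximal optimality and the least-squares gradient -/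

lemma ip_gradf (hB : B.PosDef) (A : Matrix (Fin m) (Fin n) ℝ) (y : Fin m → ℝ) (q : Fin n → ℝ) :
    ip B ((Astar B A).mulVec y) q = dotProduct y (A.mulVec q) := by
  have hu : IsUnit B.det := hB.det_pos.ne'.isUnit
  rw [ip_comm hB]
  unfold ip Astar
  rw [mulVec_mulVec, ← Matrix.mul_assoc, Matrix.mul_nonsing_inv _ hu, Matrix.one_mul,
    dotProduct_comm, mulVec_transpose, ← dotProduct_mulVec]

/-- First-order inequality along a ray issued from the proximal point. -/
lemma prox_ray (hB : B.PosDef) {A : Matrix (Fin m) (Fin n) ℝ} {b : Fin m → ℝ} {lam L : ℝ}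
    {x xp : Fin n → ℝ} (h : IsProx B A b N lam L x xp) (d : Fin n → ℝ) (t : ℝ) :
    0 ≤ t * ip B (gradf B A b x + L • (xp - x)) d + L / 2 * t ^ 2 * ip B d d +
      lam * (N (xp + t • d) - N xp) := by
  have h1 := h (xp + t • d)
  unfold mdl at h1
  rw [normu_sq hB, normu_sq hB, show xp + t • d - x = (xp - x) + t • d by abel] at h1
  generalize xp - x = y at *
  simp only [ip_add_left, ip_add_right, ip_smul_left, ip_smul_right, ip_comm hB d y] at h1 ⊢
  nlinarith

lemma nonneg_of_small {q s : ℝ} (h : ∀ t : ℝ, 0 < t → t ≤ 1 → 0 ≤ q + t * s) : 0 ≤ q := by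
  by_contra hq
  push Not at hq
  have hs := abs_nonneg s
  have hd : 0 < |s| + 1 - q := by linarith
  have h1 := h (-q / (|s| + 1 - q)) (div_pos (by linarith) hd) ((div_le_one hd).2 (by linarith))
  have h2 : -q / (|s| + 1 - q) * s ≤ -q / (|s| + 1 - q) * |s| :=
    mul_le_mul_of_nonneg_left (le_abs_self s) (div_pos (by linarith) hd).le
  have h3 : -q / (|s| + 1 - q) * |s| < -q := by
    rw [div_mul_eq_mul_div, div_lt_iff₀ hd]
    nlinarith
  linarith

lemma nonneg_of_large {q s : ℝ} (h : ∀ t : ℝ, 0 < t → 0 ≤ q + t * s) : 0 ≤ s := by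
  by_contra hs
  push Not at hs
  have h1 := h ((|q| + 1) / (-s)) (div_pos (by positivity) (by linarith))
  have h2 : (|q| + 1) / (-s) * s = -(|q| + 1) := by
    have := hs.ne
    field_simp
  rw [h2] at h1
  linarith [le_abs_self q]

/-- The optimality condition of the proximal step: `-(∇f(x) + L (x⁺ - x)) / λ ∈ ∂‖x⁺‖`. -/
lemma prox_subgrad (hB : B.PosDef) (hN : IsNorm N) {A : Matrix (Fin m) (Fin n) ℝ}
    {b : Fin m → ℝ} {lam L : ℝ} (hlam : 0 < lam) {x xp : Fin n → ℝ}
    (h : IsProx B A b N lam L x xp) :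
    (-lam⁻¹) • (gradf B A b x + L • (xp - x)) ∈ subdiff B N xp := by
  intro y
  have hmain : 0 ≤ ip B (gradf B A b x + L • (xp - x)) (y - xp) + lam * (N y - N xp) := by
    refine nonneg_of_small (s := L / 2 * ip B (y - xp) (y - xp)) fun t ht ht1 => ?_
    have h1 := prox_ray hB h (y - xp) t
    have h2 : N (xp + t • (y - xp)) ≤ (1 - t) * N xp + t * N y := by
      have e : xp + t • (y - xp) = (1 - t) • xp + t • y := by module
      rw [e]
      refine (hN.triangle _ _).trans ?_
      rw [hN.smul_eq, hN.smul_eq, abs_of_pos ht, abs_of_nonneg (by linarith)]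
    have h3 : lam * (N (xp + t • (y - xp)) - N xp) ≤ lam * (t * (N y - N xp)) :=
      mul_le_mul_of_nonneg_left (by linarith) hlam.le
    have h4 : 0 ≤ t * (ip B (gradf B A b x + L • (xp - x)) (y - xp) + lam * (N y - N xp) +
        t * (L / 2 * ip B (y - xp) (y - xp))) := by nlinarith
    exact nonneg_of_mul_nonneg_right h4 ht
  rw [ip_smul_left]
  generalize ip B (gradf B A b x + L • (xp - x)) (y - xp) = g at *
  have h5 : 0 ≤ lam⁻¹ * (g + lam * (N y - N xp)) := mul_nonneg (inv_pos.2 hlam).le hmain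
  rw [mul_add, inv_mul_cancel_left₀ hlam.ne'] at h5
  linarith

/-- The model is unbounded below for `L < 0`, so a minimizer exists only for `0 ≤ L`. -/
lemma prox_L_nonneg (hB : B.PosDef) (hN : IsNorm N) {A : Matrix (Fin m) (Fin n) ℝ}
    {b : Fin m → ℝ} {lam L : ℝ} (hlam : 0 < lam) {x xp d : Fin n → ℝ} (hd : d ≠ 0)
    (h : IsProx B A b N lam L x xp) : 0 ≤ L := by
  have hpos := ip_self_pos hB hd
  have : 0 ≤ L / 2 * ip B d d := by
    refine nonneg_of_large
      (q := ip B (gradf B A b x + L • (xp - x)) d + lam * N d) fun t ht => ?_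
    have h1 := prox_ray hB h d t
    have h2 := hN.triangle xp (t • d)
    rw [hN.smul_eq, abs_of_pos ht] at h2
    have h3 : lam * (N (xp + t • d) - N xp) ≤ lam * (t * N d) :=
      mul_le_mul_of_nonneg_left (by linarith) hlam.le
    have h4 : 0 ≤ t * (ip B (gradf B A b x + L • (xp - x)) d + lam * N d +
        t * (L / 2 * ip B d d)) := by nlinarith
    exact nonneg_of_mul_nonneg_right h4 ht
  have := nonneg_of_mul_nonneg_left this hpos
  linarith

end Aux

/-! ### Facts about the reference point -/

section Ref

variable {B : Matrix (Fin n) (Fin n) ℝ} {N : (Fin n → ℝ) → ℝ}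

/-- If `T x` is nontrivial then `x ≠ 0`: the subdifferential at `0` is the whole dual ball, which
is full-dimensional, so `T 0 = 0`. -/
lemma ne_zero_of_T (hB : B.PosDef) (hN : IsNorm N) (D : DecompStruct B N) {x u : Fin n → ℝ}
    (hu : u ∈ D.T x) (hu0 : u ≠ 0) : x ≠ 0 := by
  rintro rfl
  have h0 : DB B N 0 := fun u => by rw [ip_zero_left]; exact hN.nonneg u
  have he : D.e 0 = 0 := by
    have := K_le hB hN D (x := 0) h0 (by rw [ip_zero_left, hN.zero])
    rw [ip_zero_left] at this
    exact eq_zero_of_ip_self hB (le_antisymm this (ip_self_nonneg hB _))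
  set t := dualNorm B N u + 1 with ht
  have htpos : 0 < t := by linarith [dualNorm_nonneg (B := B) hN u]
  have hDB : DB B N (t⁻¹ • u) := fun v => by
    rw [ip_smul_left, inv_mul_le_iff₀ htpos]
    have := ip_le_dualNorm (B := B) hN u v
    nlinarith [hN.nonneg v]
  obtain ⟨v, hv, -, hv2⟩ := (mem_subdiff_D hN D 0 (t⁻¹ • u)).1
    ⟨hDB, by rw [ip_zero_right, hN.zero]⟩
  rw [he, zero_add] at hv2
  have h1 := hv u hu
  rw [← hv2, ip_smul_right] at h1
  exact (mul_pos (inv_pos.2 htpos) (ip_self_pos hB hu0)).ne' h1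

lemma one_le_K (hB : B.PosDef) (hN : IsNorm N) (hExt : ∀ a ∈ extPts N, normu B a = 1)
    (D : DecompStruct B N) {x : Fin n → ℝ} (hx : x ≠ 0) : 1 ≤ ip B (D.e x) (D.e x) := by
  have hpos : 0 < N x := lt_of_le_of_ne (hN.nonneg x) fun h => hx ((hN.eq_zero_iff x).1 h.symm)
  have h1 := ip_sq_le hB (D.e x) x
  rw [(e_DB hN D x).2] at h1
  have h2 := mul_le_mul_of_nonneg_left (ip_self_le hB hN hExt x) (ip_self_nonneg hB (D.e x))
  have h3 : 1 * N x ^ 2 ≤ ip B (D.e x) (D.e x) * N x ^ 2 := by linarith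
  exact le_of_mul_le_mul_right h3 (by positivity)

lemma sq2_nonneg (u : Fin m → ℝ) : 0 ≤ sq2 u := by
  unfold sq2
  exact Finset.sum_nonneg fun i _ => mul_self_nonneg _

/-- A weighted Young inequality in `ℝᵐ`. -/
lemma young (u v : Fin m → ℝ) (ρ l : ℝ) :
    -(4 * ρ * l * dotProduct u v) ≤ 4 * ρ ^ 2 * sq2 u + l ^ 2 * sq2 v := by
  have h : 0 ≤ dotProduct ((2 * ρ) • u + l • v) ((2 * ρ) • u + l • v) :=
    Finset.sum_nonneg fun i _ => mul_self_nonneg _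
  simp only [add_dotProduct, dotProduct_add, smul_dotProduct, dotProduct_smul, smul_eq_mul,
    dotProduct_comm v u] at h
  unfold sq2
  nlinarith

end Ref


/-! ### Numerical estimates for the constants -/

lemma one_le_c {c k M : ℝ} (hk : 1 ≤ k) (hM : k ≤ M) (h : M ^ 2 ≤ c * (k * k)) : 1 ≤ c := by
  by_contra hc
  push Not at hc
  have h1 : k * k ≤ M ^ 2 := by nlinarith
  have h2 : c * (k * k) < 1 * (k * k) := mul_lt_mul_of_pos_right hc (by positivity)
  linarith

lemma le_mul_c {c k M : ℝ} (hk : 1 ≤ k) (hc : 1 ≤ c) (h : M ^ 2 ≤ c * (k * k)) : M ≤ c * k := by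
  refine le_of_sq_le_sq (h.trans ?_) (by positivity)
  calc c * (k * k) ≤ c * c * (k * k) := by
        gcongr
        nlinarith
    _ = (c * k) ^ 2 := by ring

lemma one_le_gamma {l δ d : ℝ} (hl : 0 < l) (hd0 : 0 ≤ d) (hd : d ≤ l / 4) (hδ0 : 0 < δ)
    (hδ : δ ≤ 1 / 4) : 1 ≤ (l * (1 + δ) + d) / (l * (1 - δ) - d) := by
  have h1 : l * δ ≤ l * (1 / 4) := by gcongr
  have h2 : 0 < l * δ := by positivity
  rw [one_le_div (by linarith)]
  linarith

lemma rho_le {c r ρl ρu : ℝ} (hr : 1 < r) (hc : 1 ≤ c) (hu : 0 < ρu) (h : ρl / ρu > c / r) :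
    ρu ≤ r * ρl := by
  rw [gt_iff_lt, div_lt_div_iff₀ (by linarith) hu] at h
  have := le_mul_of_one_le_left hu.le hc
  linarith

lemma const_le {r κ g t : ℝ} (hr : 1 < r) (hκ : 1 ≤ κ) (hg : 2 ≤ g) (ht : 1 < t) :
    72 * κ ≤ 36 * r * κ * g * t := by
  have h1 : 2 ≤ r * g := by nlinarith
  have h2 : 2 ≤ r * g * t := by nlinarith
  have h3 := mul_le_mul_of_nonneg_left h2 (show 0 ≤ 36 * κ by linarith)
  linarith

/-- **Lemma 3.** Let `x⁺ = Prox_{λ,L}(x)`. Under Assumption 1 and `λ ≥ λ_tgt`,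
if `L ≤ γinc ρ₊(A, 2 k̃)` and `x` satisfies the conclusion of Lemma 2, then `K(x⁺) ≤ k̃`,
where `k̃ = 36 r c k₀ (1+γ) γinc` (so that `ρ₊(A, 2 k̃) = ρup2` of Assumption 1). -/
theorem lemma_three {n m : ℕ}
    (B : Matrix (Fin n) (Fin n) ℝ) (hB : B.PosDef)
    (N : (Fin n → ℝ) → ℝ) (hN : IsNorm N)
    (hExt : ∀ a ∈ extPts N, normu B a = 1)
    (D : DecompStruct B N)
    (A : Matrix (Fin m) (Fin n) ℝ) (x₀ : Fin n → ℝ) (z b : Fin m → ℝ)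
    (hb : b = A.mulVec x₀ + z)
    (k₀ : ℝ) (hk₀ : k₀ = Kfun B N D x₀)
    (c : ℝ)
    (hc : IsGreatest {ρ : ℝ | ∃ u ∈ D.T x₀, u ≠ 0 ∧
      ρ = (N u) ^ 2 / (k₀ * (normu B u) ^ 2)} c)
    (γinc lamtgt r δ γ ρlow ρlow2 ρup2 : ℝ)
    (hγinc : 1 < γinc) (hlamtgt : 0 < lamtgt)
    (hA1 : Assumption1 B N A z c k₀ γinc lamtgt r δ γ ρlow ρlow2 ρup2)
    (ktil : ℝ) (hktil : ktil = 36 * r * c * k₀ * (1 + γ) * γinc)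
    (lam : ℝ) (hlam : lamtgt ≤ lam)
    (L : ℝ) (hL : L ≤ γinc * ρup2)
    (x xplus : Fin n → ℝ) (hprox : IsProx B A b N lam L x xplus)
    (hx : max ((1 / (2 * lam)) * sq2 (A.mulVec (x - x₀))) (N (x - x₀)) ≤
      9 * c * k₀ * lam * (1 + γ) / (2 * ρlow)) :
    Kfun B N D xplus ≤ ktil := by
  by_contra hcon
  push Not at hcon
  obtain ⟨hz, hr, hδ0, hδ, hγ, ⟨hρl, hlow⟩, -, ⟨hρu, hup⟩, hratio⟩ := hA1
  obtain ⟨⟨u, huT, hu0, -⟩, hcub⟩ := hc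
  have hlam0 : 0 < lam := hlamtgt.trans_le hlam
  -- The reference point: `1 ≤ k₀ ≤ N (e x₀) ≤ c k₀`.
  set E := D.e x₀ with hE
  obtain ⟨hEDB, hEx⟩ := e_DB hN D x₀
  have hkE : k₀ = ip B E E := by rw [hk₀, Kfun, normu_sq hB]
  have hk1 : 1 ≤ k₀ := by
    rw [hkE]
    exact one_le_K hB hN hExt D (ne_zero_of_T hB hN D huT hu0)
  have hE0 : E ≠ 0 := fun h => by
    rw [hkE, h, ip_zero_left] at hk1
    norm_num at hk1
  have hkN : k₀ ≤ N E := by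
    rw [hkE]
    exact hEDB E
  have hcE : N E ^ 2 ≤ c * (k₀ * k₀) := by
    have := hcub ⟨E, D.e_mem x₀, hE0, rfl⟩
    rwa [normu_sq hB, ← hkE, div_le_iff₀ (by positivity)] at this
  have hc1 : 1 ≤ c := one_le_c hk1 hkN hcE
  set κ := c * k₀ with hκ
  have hkκ : k₀ ≤ κ := le_mul_of_one_le_left (by linarith) hc1
  have hEκ : N E ≤ κ := le_mul_c hk1 hc1 hcE
  have hκ1 : 1 ≤ κ := hk1.trans hkκ
  -- Bounds on the constants.
  have hγ1 : 1 ≤ γ := by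
    rw [hγ]
    exact one_le_gamma hlamtgt (dualNorm_nonneg hN _) hz hδ0 hδ
  set g := 1 + γ with hg
  have hg2 : 2 ≤ g := by linarith
  have hρ : ρup2 ≤ r * ρlow := rho_le hr hc1 hρu hratio
  have hktil' : ktil = 36 * r * κ * g * γinc := by rw [hktil, hκ]; ring
  have hkt : 72 * κ ≤ ktil := by
    rw [hktil']
    exact const_le hr hκ1 hg2 hγinc
  -- Selection of the `s` leading atoms of the proximal point.
  obtain ⟨k, a, τ, P⟩ := exists_peel hB hN hExt D xplus
  have hKk := P.K_le hB hN hExt D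
  set s := ⌈ktil⌉₊ with hs
  have hsk : s ≤ k := Nat.ceil_le.2 (by linarith)
  have hs1 : ktil ≤ s := Nat.le_ceil _
  have hs2 : (s : ℝ) < ktil + 1 := Nat.ceil_lt_add_one (by linarith)
  have hs0 : 0 < s := Nat.ceil_pos.2 (by linarith)
  set p := ∑ i ∈ Finset.range s, a i with hp
  have hpp : ip B p p = s := P.ip_sum hB hN hExt D hsk
  have hpN : N p ≤ s := by
    refine (hN.sum_le _ _).trans (le_of_eq ?_)
    rw [Finset.sum_congr rfl fun i hi =>
      ext_N hB hN hExt (P.ext i ((Finset.mem_range.1 hi).trans_le hsk))]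
    simp
  have hpDB : DB B N p := by
    simpa using P.DB_sum hB hN hExt D (fun _ => 1) (Finset.range s)
      (fun i hi => (Finset.mem_range.1 hi).trans_le hsk) (fun i _ => by norm_num)
  have htop := P.top hB hN hExt D hsk hs0 hEDB (by linarith)
  -- The subgradient supplied by the proximal step.
  set ξ := (-lam⁻¹) • (gradf B A b x + L • (xplus - x)) with hξ
  obtain ⟨hξDB, hξx⟩ := (mem_subdiff_iff hN _ _).1 (prox_subgrad hB hN hlam0 hprox)
  have hξp : ip B ξ p = s := by
    rw [ip_comm hB, hp, ip_sum_left, Finset.sum_congr rfl fun i hi => by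
      rw [ip_comm hB, P.subgrad hB hN hExt D hξDB hξx i ((Finset.mem_range.1 hi).trans_le hsk)]]
    simp
  have hL0 : 0 ≤ L := prox_L_nonneg hB hN hlam0 hu0 hprox
  set h := x - x₀ with hh
  set q := p - E with hq
  have hgrad : gradf B A b x = (Astar B A).mulVec (A.mulVec h - z) := by
    rw [gradf, hb, hh, mulVec_sub A, sub_sub]
  have hid : lam * ip B ξ q = -dotProduct (A.mulVec h) (A.mulVec q) +
      ip B ((Astar B A).mulVec z) q - L * (ip B xplus q - ip B x q) := by
    rw [hξ, ip_smul_left, ip_add_left, ip_smul_left, ip_sub_left, hgrad, ip_gradf hB,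
      ip_gradf hB, sub_dotProduct]
    field_simp
    ring
  -- Bounds on `h = x - x₀`.
  set R := 9 * c * k₀ * lam * g / (2 * ρlow) with hR
  have hRρ : R * ρlow = 9 / 2 * κ * lam * g := by
    rw [hR, hκ]
    field_simp
  have hNh : N h ≤ R := (le_max_right _ _).trans hx
  have hR0 : 0 ≤ R := (hN.nonneg h).trans hNh
  have hAh : sq2 (A.mulVec h) ≤ 2 * lam * R := by
    have := (le_max_left _ _).trans hx
    rwa [one_div, inv_mul_le_iff₀ (by positivity)] at this
  have hγ0 : 0 < γinc := by linarith
  have hLr : L ≤ γinc * (r * ρlow) := hL.trans (by gcongr)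
  have hLR : L * N h ≤ lam * ktil / 8 :=
    calc L * N h ≤ γinc * (r * ρlow) * R := by
          exact mul_le_mul hLr hNh (hN.nonneg h) (by positivity)
      _ = γinc * r * (R * ρlow) := by ring
      _ = lam * ktil / 8 := by rw [hRρ, hktil']; ring
  have hAρ : ρup2 * sq2 (A.mulVec h) ≤ lam ^ 2 * ktil / 4 :=
    calc ρup2 * sq2 (A.mulVec h) ≤ r * ρlow * (2 * lam * R) := by
          exact mul_le_mul hρ hAh (sq2_nonneg _) (by positivity)
      _ = r * (2 * lam) * (R * ρlow) := by ring
      _ = (9 * lam ^ 2 * r * κ * g) * 1 := by rw [hRρ]; ring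
      _ ≤ (9 * lam ^ 2 * r * κ * g) * γinc := by gcongr
      _ = lam ^ 2 * ktil / 4 := by rw [hktil']; ring
  -- Either the lower restricted isometry bound applies to `h`, or `‖h‖ᵤ` is small relative to
  -- `N h`; both give the same estimate on `‖h‖ᵤ`.
  have hhu : ρlow ^ 2 * ip B h h ≤ 81 / 16 * g ^ 2 * κ * lam ^ 2 := by
    have hlowh := hlow h
    rw [normu_sq hB] at hlowh
    by_cases hcase : N h ^ 2 ≤ κ * g ^ 2 * ip B h h
    · have h1 := (hlowh hcase).trans hAh
      calc ρlow ^ 2 * ip B h h = ρlow * (ρlow * ip B h h) := by ring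
        _ ≤ ρlow * (2 * lam * R) := by gcongr
        _ = 2 * lam * (R * ρlow) := by ring
        _ = (9 * g) * (κ * lam ^ 2) := by rw [hRρ]; ring
        _ ≤ (81 / 16 * g ^ 2) * (κ * lam ^ 2) :=
            mul_le_mul_of_nonneg_right (by linarith [mul_le_mul_of_nonneg_left hg2 (show 0 ≤ g by linarith)])
              (by positivity)
        _ = _ := by ring
    · push Not at hcase
      have h2 : N h ^ 2 ≤ R ^ 2 := by
        have := hN.nonneg h
        gcongr
      have h3 : κ * g ^ 2 * (ρlow ^ 2 * ip B h h) ≤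
          κ * g ^ 2 * (81 / 4 * κ * lam ^ 2) :=
        calc κ * g ^ 2 * (ρlow ^ 2 * ip B h h) = ρlow ^ 2 * (κ * g ^ 2 * ip B h h) := by ring
          _ ≤ ρlow ^ 2 * R ^ 2 := by
              have := hcase.le.trans h2
              gcongr
          _ = (R * ρlow) ^ 2 := by ring
          _ = κ * g ^ 2 * (81 / 4 * κ * lam ^ 2) := by rw [hRρ]; ring
      refine (le_of_mul_le_mul_left h3 (by positivity)).trans ?_
      have h4 : (2 : ℝ) ^ 2 ≤ g ^ 2 := by gcongr
      have h5 := mul_le_mul_of_nonneg_right h4 (show 0 ≤ κ * lam ^ 2 by positivity)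
      linarith
  have hLE : L * -ip B h E ≤ lam * ktil / 16 := by
    have h1 : (ρlow * ip B h E) ^ 2 ≤ (9 / 4 * g * κ * lam) ^ 2 := by
      have hcs := ip_sq_le hB h E
      rw [← hkE] at hcs
      calc (ρlow * ip B h E) ^ 2 = ρlow ^ 2 * ip B h E ^ 2 := by ring
        _ ≤ ρlow ^ 2 * (ip B h h * k₀) := by gcongr
        _ = (ρlow ^ 2 * ip B h h) * k₀ := by ring
        _ ≤ (81 / 16 * g ^ 2 * κ * lam ^ 2) * κ := by
            refine mul_le_mul hhu hkκ (by linarith) (by positivity)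
        _ = _ := by ring
    have h2 := abs_le_of_sq_le_sq h1 (by positivity)
    rw [abs_mul, abs_of_pos hρl] at h2
    calc L * -ip B h E ≤ L * |ip B h E| := by
          gcongr
          exact neg_le_abs _
      _ ≤ γinc * (r * ρlow) * |ip B h E| := by gcongr
      _ = γinc * r * (ρlow * |ip B h E|) := by ring
      _ ≤ γinc * r * (9 / 4 * g * κ * lam) := by gcongr
      _ = lam * ktil / 16 := by rw [hktil']; ring
  -- The test vector `q = p - e x₀`.
  have hqN : N q ≤ s + κ := by
    have h1 := hN.triangle p (-E)
    rw [hN.neg, ← sub_eq_add_neg] at h1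
    linarith
  have hqq : ip B q q = s + k₀ - 2 * ip B p E := by
    rw [hq, ip_sub_left, ip_sub_right, ip_sub_right, hpp, ← hkE, ip_comm hB E p]
    ring
  have hpE1 := hpDB E
  have hpE2 := hpDB.abs_le hN E
  have hAq : sq2 (A.mulVec q) ≤ ρup2 * (s + 3 * κ) := by
    have h1 := hup q
    rw [normu_sq hB] at h1
    refine (h1 ?_).trans (by gcongr; linarith)
    have e1 : 72 * r * c * k₀ * g * γinc = 2 * ktil := by rw [hktil]; ring
    rw [e1]
    have h2 : N q ^ 2 ≤ (74 / 72 * ktil) ^ 2 := by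
      have := hN.nonneg q
      gcongr
      linarith
    have h3 : 70 / 72 * ktil ≤ ip B q q := by linarith
    have h4 : 2 * ktil * (70 / 72 * ktil) ≤ 2 * ktil * ip B q q := by
      have : 0 ≤ 2 * ktil := by linarith
      gcongr
    have h5 : 0 ≤ ktil ^ 2 := sq_nonneg _
    linarith
  have hX : -dotProduct (A.mulVec h) (A.mulVec q) ≤ lam * (ktil + s + 3 * κ) / 4 := by
    have h1 := young (A.mulVec h) (A.mulVec q) ρup2 lam
    have h2 : 4 * ρup2 * (ρup2 * sq2 (A.mulVec h)) ≤ 4 * ρup2 * (lam ^ 2 * ktil / 4) := by gcongr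
    have h3 : lam ^ 2 * sq2 (A.mulVec q) ≤ lam ^ 2 * (ρup2 * (s + 3 * κ)) := by gcongr
    have h4 : (4 * ρup2 * lam) * -dotProduct (A.mulVec h) (A.mulVec q) ≤
        (4 * ρup2 * lam) * (lam * (ktil + s + 3 * κ) / 4) := by linarith
    exact le_of_mul_le_mul_left h4 (by positivity)
  have hzq : ip B ((Astar B A).mulVec z) q ≤ lam / 4 * (s + κ) := by
    refine (ip_le_dualNorm hN _ q).trans ?_
    exact mul_le_mul (by linarith) hqN (hN.nonneg q) (by positivity)
  have hLq : -(L * (ip B xplus q - ip B x q)) ≤ L * N h + L * -ip B h E := by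
    have h1 : ip B xplus q = ip B xplus p - ip B xplus E := ip_sub_right _ _ _
    have h2 : ip B x q = ip B h p - ip B h E + (ip B x₀ p - ip B x₀ E) := by
      rw [hh, hq]
      simp only [ip_sub_left, ip_sub_right]
      ring
    have h3 := hpDB x₀
    rw [← hEx, ip_comm hB p, ip_comm hB E] at h3
    have h4 := hpDB h
    rw [ip_comm hB p] at h4
    have h5 : ip B x q - ip B xplus q ≤ N h + -ip B h E := by linarith
    have := mul_le_mul_of_nonneg_left h5 hL0
    linarith
  have hξq : lam * (s - κ) ≤ lam * ip B ξ q := by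
    have := hξDB E
    rw [hq, ip_sub_right, hξp]
    gcongr
    linarith
  have hfin : lam * (s - κ) ≤ lam * ((ktil + s + 3 * κ) / 4 + (s + κ) / 4 + 3 * ktil / 16) := by
    linarith
  have := le_of_mul_le_mul_left hfin hlam0
  linarith

end PGH
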